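/- Let k ≥ 1 and let π be a permutation gate on n qubits. Then π is a semi-Clifford gate lying in 𝒞ₖ₊₁ if and only if there exist Clifford permutation gates φ₁, φ₂ and a mismatch-free product μ of multi-controlled NOT gates, each gate in μ having at most k controls, such that π = φ₁ μ φ₂. -/

import Mathlib

/-! Common framework: qubit gates, the Pauli group, the Clifford hierarchy,
permutation gates, Toffoli gates and staircase form, descending multiplications,
multilinear polynomial representations. -/

/-- Vectors in `𝔽₂ⁿ`, indexing computational basis states. -/
abbrev QV (n : ℕ) := Fin n → ZMod 2

/-- `n`-qubit gates: `2ⁿ × 2ⁿ` complex matrices indexed by `𝔽₂ⁿ`. -/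
abbrev QMat (n : ℕ) := Matrix (QV n) (QV n) ℂ

/-- Standard basis vector `eᵢ` of `𝔽₂ⁿ`. -/
def stdBasis (n : ℕ) (i : Fin n) : QV n := fun m => if m = i then 1 else 0

/-- The gate `X^u Z^z`, sending `|b⟩` to `(-1)^(z·b) |b+u⟩`. -/
noncomputable def XZGate (n : ℕ) (u z : QV n) : QMat n :=
  fun a b => if a = b + u then (-1 : ℂ) ^ (∑ i, (z i).val * (b i).val) else 0

/-- The Pauli group on `n` qubits: gates `c·P₁⊗⋯⊗Pₙ`, `c ∈ {±1, ±i}`,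
`Pᵢ ∈ {I,X,Y,Z}`, equivalently phases times `X^u Z^z`. -/
def PauliGroup (n : ℕ) : Set (QMat n) :=
  { P | ∃ (c : ℂ) (u z : QV n),
      (c = 1 ∨ c = -1 ∨ c = Complex.I ∨ c = -Complex.I) ∧ P = c • XZGate n u z }

/-- Level `k` of the Clifford hierarchy `𝒞ₖ` (level 1 is the Pauli group,
level 2 the Clifford group; level 0 is junk/empty). -/
def CliffordLevel (n : ℕ) : ℕ → Set (QMat n)
  | 0 => ∅
  | 1 => PauliGroup n
  | (k+2) => { U | U ∈ Matrix.unitaryGroup (QV n) ℂ ∧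
      ∀ P ∈ PauliGroup n, U * P * star U ∈ CliffordLevel n (k+1) }

/-- The permutation gate of a permutation `f` of `𝔽₂ⁿ`: sends `|v⟩` to `|f v⟩`. -/
noncomputable def permGate (n : ℕ) (f : QV n ≃ QV n) : QMat n :=
  fun a b => if a = f b then 1 else 0

/-- A diagonal gate. -/
def IsDiagonal (n : ℕ) (d : QMat n) : Prop := ∀ a b : QV n, a ≠ b → d a b = 0

/-- A gate is semi-Clifford if it equals `φ₁ d φ₂` for Clifford `φ₁, φ₂` and diagonal `d`. -/
def IsSemiClifford (n : ℕ) (U : QMat n) : Prop :=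
  ∃ φ₁ d φ₂ : QMat n, φ₁ ∈ CliffordLevel n 2 ∧ φ₂ ∈ CliffordLevel n 2 ∧
    IsDiagonal n d ∧ U = φ₁ * d * φ₂

/-- The underlying map of the Toffoli gate `TOF_{i,j,k}`: `v ↦ v + (vᵢvⱼ)·eₖ`. -/
def tofFun (n : ℕ) (i j k : Fin n) (v : QV n) : QV n :=
  fun m => if m = k then v m + v i * v j else v m

/-- A map on `𝔽₂ⁿ` is in staircase form if it is a product (applied left-to-right)
of pairwise distinct Toffoli gates `TOF_{i,j,k}` with `i<j<k` and with targets
nondecreasing in the order the gates are applied. -/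
def IsStaircase (n : ℕ) (g : QV n → QV n) : Prop :=
  ∃ L : List (Fin n × Fin n × Fin n),
    L.Nodup ∧
    (∀ t ∈ L, t.1 < t.2.1 ∧ t.2.1 < t.2.2) ∧
    List.Chain' (fun s t => s.2.2 ≤ t.2.2) L ∧
    g = fun v => L.foldl (fun w t => tofFun n t.1 t.2.1 t.2.2 w) v

/-- A descending multiplication on `𝔽₂ⁿ`: bilinear, associative, commutative,
`eᵢeᵢ = 0`, and for `i < j`, `eᵢeⱼ ∈ span{eₖ : k > j}`. -/
def IsDescendingMul (n : ℕ) (mul : QV n → QV n → QV n) : Prop :=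
  (∀ u v w : QV n, mul (u + v) w = mul u w + mul v w) ∧
  (∀ u v w : QV n, mul u (v + w) = mul u v + mul u w) ∧
  (∀ u v w : QV n, mul (mul u v) w = mul u (mul v w)) ∧
  (∀ u v : QV n, mul u v = mul v u) ∧
  (∀ i : Fin n, mul (stdBasis n i) (stdBasis n i) = 0) ∧
  (∀ i j : Fin n, i < j → ∀ m : Fin n, m ≤ j → mul (stdBasis n i) (stdBasis n j) m = 0)

/-- The product `∏_{i ∈ l} eᵢ` under a multiplication, for a list `l` (junk `0` on `[]`). -/
def dmProdList (n : ℕ) (mul : QV n → QV n → QV n) : List (Fin n) → QV n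
  | [] => 0
  | [i] => stdBasis n i
  | i :: j :: rest => mul (stdBasis n i) (dmProdList n mul (j :: rest))

/-- The product `∏_{i ∈ T} eᵢ` under a multiplication. -/
def dmProd (n : ℕ) (mul : QV n → QV n → QV n) (T : Finset (Fin n)) : QV n :=
  dmProdList n mul (T.sort (· ≤ ·))

/-- `g` is the map `∑_{i∈S} eᵢ ↦ ∑_{∅≠T⊆S} ∏_{i∈T} eᵢ` associated to a multiplication. -/
def dmPiSpec (n : ℕ) (mul : QV n → QV n → QV n) (g : QV n → QV n) : Prop :=
  ∀ S : Finset (Fin n),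
    g (∑ i ∈ S, stdBasis n i) = ∑ T ∈ S.powerset.erase ∅, dmProd n mul T

/-- The bilinear extension of `eᵢeⱼ := g(eᵢ+eⱼ) + eᵢ + eⱼ`. -/
def inducedMul (n : ℕ) (g : QV n → QV n) (u v : QV n) : QV n :=
  ∑ i : Fin n, ∑ j : Fin n,
    (u i * v j) • (g (stdBasis n i + stdBasis n j) + stdBasis n i + stdBasis n j)

/-- Coefficient of the monomial `∏_{i∈T} aᵢ` in the unique multilinear polynomial
over `𝔽₂` representing `g : 𝔽₂ⁿ → 𝔽₂` (Möbius inversion over `𝔽₂`). -/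
def mlCoeff (n : ℕ) (g : QV n → ZMod 2) (T : Finset (Fin n)) : ZMod 2 :=
  ∑ R ∈ T.powerset, g (∑ i ∈ R, stdBasis n i)

/-- Strictly lower triangular matrix. -/
def StrictLowerTri (n : ℕ) (A : Matrix (Fin n) (Fin n) (ZMod 2)) : Prop :=
  ∀ p q : Fin n, p ≤ q → A p q = 0

/-- Multiplication of basis vectors for the gate `U_k`: the basis of `𝔽₂^(2^k-1)` is
indexed by nonempty subsets `S ⊆ [k]`, encoded as indices `a` via the binary digits of
`a+1`; `e_S e_T = e_{S∪T}` if `S ∩ T = ∅` and `e_S e_T = 0` otherwise. -/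
def ukBasisMul (k : ℕ) (a b : Fin (2 ^ k - 1)) : QV (2 ^ k - 1) :=
  if (a.val + 1) &&& (b.val + 1) = 0 then
    (if h : a.val + b.val + 1 < 2 ^ k - 1 then stdBasis (2 ^ k - 1) ⟨a.val + b.val + 1, h⟩
     else 0)
  else 0

/-- The descending multiplication defining `U_k`, extended bilinearly. -/
def ukMul (k : ℕ) (u v : QV (2 ^ k - 1)) : QV (2 ^ k - 1) :=
  ∑ a : Fin (2 ^ k - 1), ∑ b : Fin (2 ^ k - 1), (u a * v b) • ukBasisMul k a b

/-- The underlying map of the multi-controlled NOT gate with control set `C` and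
target `t`: `v ↦ v + (∏_{i∈C} vᵢ)·e_t`. -/
def mcxFun (n : ℕ) (C : Finset (Fin n)) (t : Fin n) (v : QV n) : QV n :=
  fun m => if m = t then v m + ∏ i ∈ C, v i else v m

/-!
A mismatch-free product of multi-controlled NOT gates is a shear `v ↦ v + h v`: the displacement
`h` is supported on the targets, depends only on the remaining qubits, and has as monomials the
sets of controls. Conjugating a shear by Hadamard gates on its targets gives the diagonal gate with
signs `(-1)^(v ⬝ᵥ h v)`. Conjugating `X^u` by a diagonal sign gate differentiates the exponent in
direction `u`, so the level of such a gate in the Clifford hierarchy is the degree of the exponent,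
which here is one more than the degree of `h`. Hence a shear is semi-Clifford, and its level is
governed by the number of controls.

Conversely, let `π = φ₁ d φ₂` be semi-Clifford and let `A` be its space of linear structures. As
`d` commutes with every `Z^z`, conjugation by `π` maps the Pauli gate `φ₂† Z^z φ₂` to a Pauli gate,
so its `X`-part lies in `A`. For `ζ ⊥ A` the gate `Z^ζ` therefore commutes with all `φ₂† Z^z φ₂`,
so `φ₂ Z^ζ φ₂†` is diagonal and `π` conjugates `Z^ζ` to a Pauli gate as well. Thus `π` is affine on
cosets of `A` and induces an affine map on the quotient by `A`; up to affine permutations, which are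
Clifford, such a permutation is a shear.
-/

section Degree

open scoped fwdDiff

variable {M G H ι : Type*} [AddCommMonoid M] [AddCommGroup G] [AddCommGroup H]

/-- `DegreeLE k p` says that `p : M → G` is a polynomial map of degree at most `k`, meaning that
all its `(k + 1)`-fold finite differences vanish. On `𝔽₂ⁿ` this is the degree of the multilinear
polynomial representing `p`. -/
def DegreeLE : ℕ → (M → G) → Prop
  | 0, p => ∀ u v, p u = p v
  | k + 1, p => ∀ u, DegreeLE k (Δ_[u] p)

namespace DegreeLE

lemma const (k : ℕ) (c : G) : DegreeLE k fun _ : M => c := by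
  induction k generalizing c with
  | zero => exact fun _ _ => rfl
  | succ k ih => exact fun u => by simpa only [fwdDiff_const] using ih 0

lemma add {k : ℕ} {p q : M → G} (hp : DegreeLE k p) (hq : DegreeLE k q) :
    DegreeLE k (p + q) := by
  induction k generalizing p q with
  | zero => exact fun u v => congrArg₂ (· + ·) (hp u v) (hq u v)
  | succ k ih => exact fun u => by simpa only [fwdDiff_add] using ih (hp u) (hq u)

lemma sum {k : ℕ} (s : Finset ι) {p : ι → M → G} (hp : ∀ i ∈ s, DegreeLE k (p i)) :
    DegreeLE k (∑ i ∈ s, p i) :=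
  Finset.sum_induction p (DegreeLE k) (fun _ _ => add) (const k 0) hp

lemma comp_add_right {k : ℕ} {p : M → G} (hp : DegreeLE k p) (u : M) :
    DegreeLE k fun v => p (v + u) := by
  induction k generalizing p with
  | zero => exact fun v w => hp _ _
  | succ k ih =>
    intro v
    convert ih (hp v) using 1
    funext w
    simp only [fwdDiff, add_right_comm]

lemma map {k : ℕ} {p : M → G} (hp : DegreeLE k p) (f : G →+ H) : DegreeLE k (f ∘ p) := by
  induction k generalizing p with
  | zero => exact fun u v => congrArg f (hp u v)
  | succ k ih =>
    intro u
    convert ih (hp u) using 1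
    funext v
    simp only [fwdDiff, Function.comp_apply, map_sub]

lemma succ {k : ℕ} {p : M → G} (hp : DegreeLE k p) : DegreeLE (k + 1) p := by
  induction k generalizing p with
  | zero =>
    intro u v w
    simp only [fwdDiff, hp _ 0, sub_self]
  | succ k ih => exact fun u => ih (hp u)

lemma mono {k l : ℕ} {p : M → G} (hp : DegreeLE k p) (hkl : k ≤ l) : DegreeLE l p :=
  Nat.le_induction hp (fun _ _ => succ) l hkl

lemma mul {R : Type*} [NonUnitalRing R] {k l : ℕ} {p q : M → R} (hp : DegreeLE k p)
    (hq : DegreeLE l q) : DegreeLE (k + l) (p * q) := by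
  induction k generalizing l p q with
  | zero =>
    have hpq : p * q = AddMonoidHom.mulLeft (p 0) ∘ q := funext fun v => by simp [hp v 0]
    rw [hpq, zero_add]
    exact hq.map _
  | succ k ihk =>
    induction l generalizing p q with
    | zero =>
      have hpq : p * q = AddMonoidHom.mulRight (q 0) ∘ p := funext fun v => by simp [hq v 0]
      rw [hpq]
      exact hp.map _
    | succ l ihl =>
      intro u
      have leibniz : Δ_[u] (p * q) = (fun v => p (v + u)) * Δ_[u] q + Δ_[u] p * q := by
        funext v
        simp only [fwdDiff, Pi.add_apply, Pi.mul_apply]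
        noncomm_ring
      rw [leibniz]
      refine (ihl (hp.comp_add_right u) (hq u)).add ?_
      simpa only [add_assoc, add_comm 1 l] using ihk (hp u) hq

lemma of_addMonoidHom (f : M →+ G) : DegreeLE 1 f := by
  intro u v w
  simp only [fwdDiff, map_add, add_sub_cancel_left]

lemma prod {R : Type*} [CommRing R] (s : Finset ι) {p : ι → M → R}
    (hp : ∀ i ∈ s, DegreeLE 1 (p i)) : DegreeLE s.card (∏ i ∈ s, p i) := by
  classical
  induction s using Finset.induction_on with
  | empty => exact const 0 1
  | insert i s hi ih =>
    rw [Finset.prod_insert hi, Finset.card_insert_of_notMem hi, add_comm]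
    exact (hp i (Finset.mem_insert_self i s)).mul
      (ih fun j hj => hp j (Finset.mem_insert_of_mem hj))

end DegreeLE

lemma degreeLE_pi_iff {A : ι → Type*} [∀ i, AddCommGroup (A i)] {k : ℕ} {p : M → ∀ i, A i} :
    DegreeLE k p ↔ ∀ i, DegreeLE k fun v => p v i := by
  induction k generalizing p with
  | zero => exact ⟨fun hp i u v => congrFun (hp u v) i, fun hp u v => funext fun i => hp i u v⟩
  | succ k ih =>
    calc (∀ u, DegreeLE k (Δ_[u] p)) ↔ ∀ u i, DegreeLE k fun v => Δ_[u] p v i :=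
          forall_congr' fun u => ih
      _ ↔ ∀ i u, DegreeLE k (Δ_[u] fun v => p v i) := forall_comm

lemma degreeLE_one_iff {p : M → G} : DegreeLE 1 p ↔ ∃ (f : M →+ G) (c : G), ∀ v, p v = f v + c := by
  constructor
  · intro hp
    have hadd : ∀ v u, p (v + u) - p 0 = p v - p 0 + (p u - p 0) := by
      intro v u
      have hΔ : p (v + u) - p v = p (0 + u) - p 0 := hp u v 0
      rw [zero_add] at hΔ
      rw [← hΔ]
      abel
    exact ⟨AddMonoidHom.mk' (fun v => p v - p 0) hadd, p 0, fun v => (sub_add_cancel _ _).symm⟩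
  · rintro ⟨f, c, hf⟩
    rw [show p = ⇑f + fun _ => c from funext hf]
    exact (DegreeLE.of_addMonoidHom f).add (DegreeLE.const 1 c)

end Degree

section LinearAlgebra

variable {K V W ι : Type*} [Field K] [AddCommGroup V] [Module K V] [AddCommGroup W] [Module K W]

lemma exists_linearMap_eq_of_forall_dual {g : V → W}
    (hg : ∀ φ : Module.Dual K W, ∃ ψ : Module.Dual K V, ∀ v, φ (g v) = ψ v) :
    ∃ Q : V →ₗ[K] W, ∀ v, Q v = g v := by
  have hadd : ∀ u v, g (u + v) = g u + g v := by
    refine fun u v => sub_eq_zero.1 ((Module.forall_dual_apply_eq_zero_iff K _).1 fun φ => ?_)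
    obtain ⟨ψ, hψ⟩ := hg φ
    rw [map_sub, map_add, hψ, hψ, hψ, map_add, sub_self]
  have hsmul : ∀ (c : K) (v : V), g (c • v) = c • g v := by
    refine fun c v => sub_eq_zero.1 ((Module.forall_dual_apply_eq_zero_iff K _).1 fun φ => ?_)
    obtain ⟨ψ, hψ⟩ := hg φ
    rw [map_sub, map_smul, hψ, hψ, map_smul, sub_self]
  exact ⟨{ toFun := g, map_add' := hadd, map_smul' := hsmul }, fun _ => rfl⟩

lemma exists_linearMap_extend_lift {A : Submodule K V} (Q : V →ₗ[K] V ⧸ A)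
    (hQ : Function.Surjective Q) (eA : A →ₗ[K] V) (hQA : ∀ u, Q (eA u) = 0) :
    ∃ G : V →ₗ[K] V, (∀ u : A, G u = eA u) ∧ ∀ w, Q (G w) = A.mkQ w := by
  obtain ⟨G₀, hG₀⟩ := Module.projective_lifting_property Q A.mkQ hQ
  obtain ⟨p, hp⟩ := LinearMap.exists_leftInverse_of_injective A.subtype A.ker_subtype
  have hQG₀ (w : V) : Q (G₀ w) = A.mkQ w := LinearMap.congr_fun hG₀ w
  refine ⟨G₀ + (eA - G₀ ∘ₗ A.subtype) ∘ₗ p, fun u => ?_, fun w => ?_⟩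
  · have hpu : p u = u := LinearMap.congr_fun hp u
    simp [hpu]
  · have hpw : A.mkQ (p w : V) = 0 := (Submodule.Quotient.mk_eq_zero A).2 (p w).2
    simp only [LinearMap.add_apply, LinearMap.comp_apply, LinearMap.sub_apply,
      Submodule.subtype_apply, map_add, map_sub, hQA, hQG₀, hpw, sub_zero, add_zero]

lemma exists_linearEquiv_extend_lift {A : Submodule K V} (e : V ≃ V) (eA : A →ₗ[K] V)
    (heA : ∀ u : A, e u = eA u) (Q : V →ₗ[K] V ⧸ A) (hQ : ∀ w, Q (e w) = A.mkQ w) :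
    ∃ G : V ≃ₗ[K] V, (∀ u ∈ A, G u = e u) ∧ ∀ w, G.symm (e w) - w ∈ A := by
  have hQ_surj : Function.Surjective Q := fun x => by
    obtain ⟨w, rfl⟩ := A.mkQ_surjective x
    exact ⟨e w, hQ w⟩
  have hQA : ∀ u : A, Q (eA u) = 0 := fun u => by
    rw [← heA, hQ]
    exact (Submodule.Quotient.mk_eq_zero A).2 u.2
  obtain ⟨G, hGA, hQG⟩ := exists_linearMap_extend_lift Q hQ_surj eA hQA
  replace hGA : ∀ u ∈ A, G u = e u := fun u hu => (hGA ⟨u, hu⟩).trans (heA ⟨u, hu⟩).symm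
  have hG_mod : ∀ w, ∃ a ∈ A, e w = G (w + a) := fun w => by
    obtain ⟨a, ha⟩ := e.surjective (e w - G w)
    have haA : a ∈ A := by
      rw [← Submodule.Quotient.mk_eq_zero A, ← Submodule.mkQ_apply, ← hQ, ha, map_sub, hQ, hQG,
        sub_self]
    exact ⟨a, haA, by rw [map_add, hGA a haA, ha, add_sub_cancel]⟩
  have hG_inj : Function.Injective G := (injective_iff_map_eq_zero G).2 fun w hw => by
    have hwA : w ∈ A := by
      rw [← Submodule.Quotient.mk_eq_zero A, ← Submodule.mkQ_apply, ← hQG, hw, map_zero]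
    refine e.injective ?_
    rw [← hGA w hwA, hw, ← hGA 0 A.zero_mem, map_zero]
  have hG_surj : Function.Surjective G := fun y => by
    obtain ⟨a, -, ha⟩ := hG_mod (e.symm y)
    exact ⟨_, ha.symm.trans (e.apply_symm_apply y)⟩
  refine ⟨LinearEquiv.ofBijective G ⟨hG_inj, hG_surj⟩, hGA, fun w => ?_⟩
  obtain ⟨a, ha, hw⟩ := hG_mod w
  rwa [(LinearEquiv.symm_apply_eq _).2 hw, add_sub_cancel_left]

lemma exists_adapted_linearEquiv [Finite ι] (A : Submodule K (ι → K)) :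
    ∃ (β : (ι → K) ≃ₗ[K] (ι → K)) (T : Finset ι), ∀ v, β v ∈ A ↔ ∀ i ∉ T, v i = 0 := by
  have := Fintype.ofFinite ι
  obtain ⟨m, snf⟩ := Submodule.smithNormalForm (Pi.basisFun K ι) A
  have hmem : ∀ j, snf.bM (snf.f j) ∈ A := fun j => by
    have hbN : (snf.bN j : ι → K) ≠ 0 := fun h => snf.bN.ne_zero j (Subtype.ext h)
    rw [snf.snf] at hbN
    rw [← A.smul_mem_iff (smul_ne_zero_iff.1 hbN).1, ← snf.snf]
    exact (snf.bN j).2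
  refine ⟨snf.bM.equivFun.symm, Finset.univ.map snf.f, fun v => ⟨fun hv i hi => ?_, fun hv => ?_⟩⟩
  · have hi' : i ∉ Set.range snf.f := by simpa using hi
    calc v i = snf.bM.equivFun (snf.bM.equivFun.symm v) i := by rw [LinearEquiv.apply_symm_apply]
      _ = 0 := snf.repr_eq_zero_of_notMem_range ⟨_, hv⟩ hi'
  · rw [Module.Basis.equivFun_symm_apply]
    refine A.sum_mem fun i _ => ?_
    by_cases hi : i ∈ Finset.univ.map snf.f
    · obtain ⟨j, -, rfl⟩ := Finset.mem_map.1 hi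
      exact A.smul_mem _ (hmem j)
    · simp only [hv i hi, zero_smul, A.zero_mem]

end LinearAlgebra

section Pauli

open scoped Matrix

local notation "χ" => ZMod.stdAddChar (N := 2)

lemma stdAddChar_two_natCast (m : ℕ) : χ m = (-1) ^ m := by
  have hχ : χ ((1 : ℤ) : ZMod 2) = -1 := by
    rw [ZMod.stdAddChar_coe, ← Complex.exp_pi_mul_I]
    congr 1
    push_cast
    ring
  rw [← nsmul_one, AddChar.map_nsmul_eq_pow, ← hχ, Int.cast_one]

lemma stdAddChar_two_mul_self (x : ZMod 2) : χ x * χ x = 1 := by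
  rw [← AddChar.map_add_eq_mul, CharTwo.add_self_eq_zero, AddChar.map_zero_eq_one]

lemma stdAddChar_two_pow_four (x : ZMod 2) : χ x ^ 4 = 1 := by
  rw [show 4 = 2 * 2 from rfl, pow_mul, sq (χ x), stdAddChar_two_mul_self, one_pow]

lemma star_stdAddChar_two (x : ZMod 2) : star (χ x) = χ x := by
  rw [← starRingEnd_apply, ← AddChar.map_neg_eq_conj, CharTwo.neg_eq]

variable {n : ℕ}

lemma eq_add_iff_add_eq {a b u : QV n} : a = b + u ↔ a + u = b := by
  rw [← sub_eq_iff_eq_add, ZModModule.sub_eq_add]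

lemma XZGate_apply (u z a b : QV n) :
    XZGate n u z a b = if a = b + u then χ (z ⬝ᵥ b) else 0 := by
  have hdot : z ⬝ᵥ b = ((∑ i, (z i).val * (b i).val : ℕ) : ZMod 2) := by
    simp only [dotProduct, Nat.cast_sum, Nat.cast_mul, ZMod.natCast_zmod_val]
  rw [XZGate, hdot, stdAddChar_two_natCast]

lemma mul_XZGate_apply (M : QMat n) (u z a b : QV n) :
    (M * XZGate n u z) a b = M a (b + u) * χ (z ⬝ᵥ b) := by
  simp only [Matrix.mul_apply, XZGate_apply, mul_ite, mul_zero, Finset.sum_ite_eq',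
    Finset.mem_univ, if_true]

lemma XZGate_mul_apply (M : QMat n) (u z a b : QV n) :
    (XZGate n u z * M) a b = χ (z ⬝ᵥ (a + u)) * M (a + u) b := by
  simp only [Matrix.mul_apply, XZGate_apply, eq_add_iff_add_eq, ite_mul, zero_mul,
    Finset.sum_ite_eq, Finset.mem_univ, if_true]

lemma XZGate_zero : XZGate n 0 0 = 1 := by
  ext a b
  rw [XZGate_apply, zero_dotProduct, AddChar.map_zero_eq_one, add_zero, Matrix.one_apply]

lemma XZGate_mul_XZGate (u z u' z' : QV n) :
    XZGate n u z * XZGate n u' z' = χ (z ⬝ᵥ u') • XZGate n (u + u') (z + z') := by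
  ext a b
  rw [mul_XZGate_apply, XZGate_apply, Matrix.smul_apply, XZGate_apply, smul_eq_mul, ite_mul,
    mul_ite, zero_mul, mul_zero, dotProduct_add, add_dotProduct, AddChar.map_add_eq_mul,
    AddChar.map_add_eq_mul, add_comm u, add_assoc]
  congr 1
  ring

lemma star_XZGate (u z : QV n) : star (XZGate n u z) = χ (z ⬝ᵥ u) • XZGate n u z := by
  ext a b
  rw [Matrix.star_apply, XZGate_apply, Matrix.smul_apply, XZGate_apply]
  by_cases h : b = a + u
  · have hχ : χ (z ⬝ᵥ u) * χ (z ⬝ᵥ b) = χ (z ⬝ᵥ a) := by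
      rw [← AddChar.map_add_eq_mul, ← dotProduct_add, add_comm, eq_add_iff_add_eq.1 h]
    rw [if_pos h, if_pos (eq_add_iff_add_eq.1 h).symm, smul_eq_mul, hχ, star_stdAddChar_two]
  · rw [if_neg h, if_neg fun h' => h (eq_add_iff_add_eq.2 h'.symm), smul_zero, star_zero]

lemma mem_pauliGroup_iff {P : QMat n} :
    P ∈ PauliGroup n ↔ ∃ (c : ℂ) (u z : QV n), c ^ 4 = 1 ∧ P = c • XZGate n u z := by
  have hroots (c : ℂ) : (c = 1 ∨ c = -1 ∨ c = Complex.I ∨ c = -Complex.I) ↔ c ^ 4 = 1 := by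
    have hfactor : c ^ 4 - 1 = (c - 1) * (c + 1) * ((c - Complex.I) * (c + Complex.I)) := by
      linear_combination (c ^ 2 - 1) * Complex.I_sq
    rw [← sub_eq_zero (a := c ^ 4), hfactor]
    simp only [mul_eq_zero, sub_eq_zero, add_eq_zero_iff_eq_neg, or_assoc]
  simp only [PauliGroup, Set.mem_ofPred_eq, hroots]

lemma XZGate_mem_pauliGroup (u z : QV n) : XZGate n u z ∈ PauliGroup n :=
  mem_pauliGroup_iff.2 ⟨1, u, z, one_pow 4, (one_smul ℂ _).symm⟩

lemma smul_mem_pauliGroup {c : ℂ} (hc : c ^ 4 = 1) {P : QMat n} (hP : P ∈ PauliGroup n) :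
    c • P ∈ PauliGroup n := by
  obtain ⟨d, u, z, hd, rfl⟩ := mem_pauliGroup_iff.1 hP
  exact mem_pauliGroup_iff.2 ⟨c * d, u, z, by rw [mul_pow, hc, hd, one_mul], smul_smul c d _⟩

lemma mul_mem_pauliGroup {P Q : QMat n} (hP : P ∈ PauliGroup n) (hQ : Q ∈ PauliGroup n) :
    P * Q ∈ PauliGroup n := by
  obtain ⟨c, u, z, hc, rfl⟩ := mem_pauliGroup_iff.1 hP
  obtain ⟨d, u', z', hd, rfl⟩ := mem_pauliGroup_iff.1 hQ
  rw [smul_mul_smul_comm, XZGate_mul_XZGate]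
  exact smul_mem_pauliGroup (by rw [mul_pow, hc, hd, one_mul])
    (smul_mem_pauliGroup (stdAddChar_two_pow_four _) (XZGate_mem_pauliGroup _ _))

lemma star_mem_pauliGroup {P : QMat n} (hP : P ∈ PauliGroup n) : star P ∈ PauliGroup n := by
  obtain ⟨c, u, z, hc, rfl⟩ := mem_pauliGroup_iff.1 hP
  rw [star_smul, star_XZGate]
  exact smul_mem_pauliGroup (by rw [← star_pow, hc, star_one])
    (smul_mem_pauliGroup (stdAddChar_two_pow_four _) (XZGate_mem_pauliGroup _ _))

lemma mem_unitaryGroup_of_mem_pauliGroup {P : QMat n} (hP : P ∈ PauliGroup n) :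
    P ∈ Matrix.unitaryGroup (QV n) ℂ := by
  obtain ⟨c, u, z, hc, rfl⟩ := mem_pauliGroup_iff.1 hP
  have hc_unitary : c ∈ unitary ℂ := by
    rw [Unitary.mem_iff_star_mul_self, ← starRingEnd_apply, Complex.conj_mul',
      Complex.norm_eq_one_of_pow_eq_one hc four_ne_zero, Complex.ofReal_one, one_pow]
  refine Unitary.smul_mem_of_mem hc_unitary ?_
  rw [Matrix.mem_unitaryGroup_iff, star_XZGate, mul_smul_comm, XZGate_mul_XZGate, smul_smul,
    stdAddChar_two_mul_self, one_smul, ZModModule.add_self, ZModModule.add_self, XZGate_zero]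

lemma finite_pauliGroup (n : ℕ) : (PauliGroup n).Finite := by
  have hphases : {c : ℂ | c ^ 4 = 1}.Finite := by
    refine (Polynomial.nthRootsFinset 4 (1 : ℂ)).finite_toSet.subset fun c hc => ?_
    exact (Polynomial.mem_nthRootsFinset four_pos 1).2 hc
  refine ((hphases.prod (Set.finite_univ (α := QV n × QV n))).image
    fun p => p.1 • XZGate n p.2.1 p.2.2).subset fun P hP => ?_
  obtain ⟨c, u, z, hc, rfl⟩ := mem_pauliGroup_iff.1 hP
  exact ⟨(c, u, z), ⟨hc, Set.mem_univ _⟩, rfl⟩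

end Pauli

section CliffordHierarchy

variable {n k : ℕ} {U V W P : QMat n}

lemma star_mul_conj_mul {R : Type*} [Monoid R] [StarMul R] {u : R} (hu : u ∈ unitary R) (x : R) :
    star u * (u * x * star u) * u = x := by
  simp only [mul_assoc, Unitary.star_mul_self_of_mem hu, mul_one]
  rw [← mul_assoc, Unitary.star_mul_self_of_mem hu, one_mul]

lemma pauliGroup_subset_cliffordLevel_two : PauliGroup n ⊆ CliffordLevel n 2 := fun _ hP =>
  ⟨mem_unitaryGroup_of_mem_pauliGroup hP, fun _ hQ =>
    mul_mem_pauliGroup (mul_mem_pauliGroup hP hQ) (star_mem_pauliGroup hP)⟩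

lemma star_mem_cliffordLevel_two (hV : V ∈ CliffordLevel n 2) : star V ∈ CliffordLevel n 2 := by
  have hconj : Set.BijOn (fun P => V * P * star V) (PauliGroup n) (PauliGroup n) := by
    refine ((finite_pauliGroup n).injOn_iff_bijOn_of_mapsTo hV.2).1 fun P _ Q _ hPQ => ?_
    rw [← star_mul_conj_mul hV.1 P, ← star_mul_conj_mul hV.1 Q]
    exact congrArg (fun M => star V * M * V) hPQ
  refine ⟨Unitary.star_mem hV.1, fun P hP => ?_⟩
  obtain ⟨Q, hQ, rfl⟩ := hconj.surjOn hP
  rwa [star_star, star_mul_conj_mul hV.1]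

lemma conj_mem_cliffordLevel (hV : V ∈ CliffordLevel n 2) (hU : U ∈ CliffordLevel n (k + 1)) :
    V * U * star V ∈ CliffordLevel n (k + 1) := by
  induction k generalizing U with
  | zero => exact hV.2 U hU
  | succ k ih =>
    refine ⟨mul_mem (mul_mem hV.1 hU.1) (Unitary.star_mem hV.1), fun P hP => ?_⟩
    have hP' := (star_mem_cliffordLevel_two hV).2 P hP
    simpa only [star_mul, star_star, mul_assoc] using ih (hU.2 _ hP')

lemma mul_clifford_mem_cliffordLevel (hU : U ∈ CliffordLevel n (k + 2))
    (hV : V ∈ CliffordLevel n 2) : U * V ∈ CliffordLevel n (k + 2) :=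
  ⟨mul_mem hU.1 hV.1, fun P hP => by
    simpa only [star_mul, mul_assoc] using hU.2 _ (hV.2 P hP)⟩

lemma clifford_mul_mem_cliffordLevel (hV : V ∈ CliffordLevel n 2)
    (hU : U ∈ CliffordLevel n (k + 2)) : V * U ∈ CliffordLevel n (k + 2) := by
  simpa only [mul_assoc, Unitary.star_mul_self_of_mem hV.1, mul_one] using
    mul_clifford_mem_cliffordLevel (conj_mem_cliffordLevel hV hU) hV

lemma clifford_mul_mul_mem_cliffordLevel_iff (hV : V ∈ CliffordLevel n 2)
    (hW : W ∈ CliffordLevel n 2) :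
    V * U * W ∈ CliffordLevel n (k + 2) ↔ U ∈ CliffordLevel n (k + 2) := by
  refine ⟨fun h => ?_,
    fun hU => mul_clifford_mem_cliffordLevel (clifford_mul_mem_cliffordLevel hV hU) hW⟩
  have hU : star V * (V * U * W) * star W = U := by
    rw [mul_assoc V, ← mul_assoc, Unitary.star_mul_self_of_mem hV.1, one_mul, mul_assoc,
      Unitary.mul_star_self_of_mem hW.1, mul_one]
  rw [← hU]
  exact mul_clifford_mem_cliffordLevel
    (clifford_mul_mem_cliffordLevel (star_mem_cliffordLevel_two hV) h)
    (star_mem_cliffordLevel_two hW)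

lemma mul_pauli_mem_cliffordLevel (hU : U ∈ CliffordLevel n (k + 1)) (hP : P ∈ PauliGroup n) :
    U * P ∈ CliffordLevel n (k + 1) := by
  cases k with
  | zero => exact mul_mem_pauliGroup hU hP
  | succ k => exact mul_clifford_mem_cliffordLevel hU (pauliGroup_subset_cliffordLevel_two hP)

lemma mul_pauli_mem_cliffordLevel_iff (hP : P ∈ PauliGroup n) :
    U * P ∈ CliffordLevel n (k + 1) ↔ U ∈ CliffordLevel n (k + 1) := by
  refine ⟨fun h => ?_, fun hU => mul_pauli_mem_cliffordLevel hU hP⟩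
  simpa only [mul_assoc, Unitary.mul_star_self_of_mem (mem_unitaryGroup_of_mem_pauliGroup hP),
    mul_one] using mul_pauli_mem_cliffordLevel h (star_mem_pauliGroup hP)

lemma smul_mem_cliffordLevel {c : ℂ} (hc : c ^ 4 = 1) (hU : U ∈ CliffordLevel n (k + 1)) :
    c • U ∈ CliffordLevel n (k + 1) := by
  have hscalar : c • (1 : QMat n) ∈ PauliGroup n := by
    rw [← XZGate_zero]
    exact smul_mem_pauliGroup hc (XZGate_mem_pauliGroup 0 0)
  simpa only [mul_smul_comm, mul_one] using mul_pauli_mem_cliffordLevel hU hscalar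

lemma mem_cliffordLevel_add_two_iff_XZGate :
    U ∈ CliffordLevel n (k + 2) ↔ U ∈ Matrix.unitaryGroup (QV n) ℂ ∧
      ∀ u z, U * XZGate n u z * star U ∈ CliffordLevel n (k + 1) := by
  refine and_congr_right fun _ => ⟨fun h u z => h _ (XZGate_mem_pauliGroup u z), fun h P hP => ?_⟩
  obtain ⟨c, u, z, hc, rfl⟩ := mem_pauliGroup_iff.1 hP
  rw [mul_smul_comm, smul_mul_assoc]
  exact smul_mem_cliffordLevel hc (h u z)

lemma isSemiClifford_clifford_mul_mul (hV : V ∈ CliffordLevel n 2) (hW : W ∈ CliffordLevel n 2)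
    (hU : IsSemiClifford n U) : IsSemiClifford n (V * U * W) := by
  obtain ⟨φ₁, d, φ₂, hφ₁, hφ₂, hd, rfl⟩ := hU
  exact ⟨V * φ₁, d, φ₂ * W, mul_clifford_mem_cliffordLevel hV hφ₁,
    mul_clifford_mem_cliffordLevel hφ₂ hW, hd, by simp only [mul_assoc]⟩

end CliffordHierarchy

section PhaseGate

open scoped Matrix fwdDiff

local notation "χ" => ZMod.stdAddChar (N := 2)

variable {n : ℕ}

/-- The diagonal gate with signs `|v⟩ ↦ (-1)^(p v) |v⟩`, for a Boolean function `p`. -/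
noncomputable def phaseGate (p : QV n → ZMod 2) : QMat n :=
  Matrix.diagonal fun v => χ (p v)

lemma star_phaseGate (p : QV n → ZMod 2) : star (phaseGate p) = phaseGate p := by
  rw [phaseGate, Matrix.star_eq_conjTranspose, Matrix.diagonal_conjTranspose]
  exact congrArg _ (funext fun v => star_stdAddChar_two (p v))

lemma phaseGate_mem_unitaryGroup (p : QV n → ZMod 2) :
    phaseGate p ∈ Matrix.unitaryGroup (QV n) ℂ := by
  rw [Matrix.mem_unitaryGroup_iff, star_phaseGate, phaseGate, Matrix.diagonal_mul_diagonal]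
  simp only [stdAddChar_two_mul_self, Matrix.diagonal_one]

lemma phaseGate_conj_XZGate (p : QV n → ZMod 2) (u z : QV n) :
    phaseGate p * XZGate n u z * star (phaseGate p) = phaseGate (Δ_[u] p) * XZGate n u z := by
  ext a b
  rw [star_phaseGate, phaseGate, phaseGate, Matrix.mul_diagonal, Matrix.diagonal_mul,
    Matrix.diagonal_mul, XZGate_apply]
  split_ifs with h
  · have hΔ : Δ_[u] p a = p a + p b := by
      rw [fwdDiff, eq_add_iff_add_eq.1 h, ZModModule.sub_eq_add, add_comm]
    rw [hΔ, AddChar.map_add_eq_mul, mul_right_comm]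
  · simp only [mul_zero, zero_mul]

lemma exists_eq_dotProduct (f : Module.Dual (ZMod 2) (QV n)) : ∃ z, ∀ v, f v = z ⬝ᵥ v :=
  ⟨(dotProductEquiv (ZMod 2) (Fin n)).symm f, fun v =>
    (LinearMap.congr_fun ((dotProductEquiv (ZMod 2) (Fin n)).apply_symm_apply f) v).symm⟩

lemma degreeLE_one_iff_dotProduct {p : QV n → ZMod 2} :
    DegreeLE 1 p ↔ ∃ z c, ∀ v, p v = z ⬝ᵥ v + c := by
  rw [degreeLE_one_iff]
  constructor
  · rintro ⟨f, c, hf⟩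
    obtain ⟨z, hz⟩ := exists_eq_dotProduct (f.toZModLinearMap 2)
    exact ⟨z, c, fun v => (hf v).trans (congrArg (· + c) (hz v))⟩
  · rintro ⟨z, c, hz⟩
    exact ⟨(dotProductEquiv (ZMod 2) (Fin n) z).toAddMonoidHom, c, hz⟩

lemma phaseGate_mem_pauliGroup_iff {p : QV n → ZMod 2} :
    phaseGate p ∈ PauliGroup n ↔ DegreeLE 1 p := by
  rw [degreeLE_one_iff_dotProduct, mem_pauliGroup_iff]
  constructor
  · rintro ⟨c, u, z, -, hp⟩
    have hdiag (v : QV n) : χ (p v) = c * (if u = 0 then χ (z ⬝ᵥ v) else 0) := by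
      have hv := congrFun (congrFun hp v) v
      simpa only [phaseGate, Matrix.diagonal_apply_eq, Matrix.smul_apply, XZGate_apply,
        smul_eq_mul, left_eq_add] using hv
    have hu : u = 0 := by
      by_contra hu
      exact (AddChar.val_isUnit χ (p 0)).ne_zero ((hdiag 0).trans (by rw [if_neg hu, mul_zero]))
    simp only [if_pos hu] at hdiag
    have hc : χ (p 0) = c := by
      rw [hdiag, dotProduct_zero, AddChar.map_zero_eq_one, mul_one]
    refine ⟨z, p 0, fun v => ZMod.injective_stdAddChar ?_⟩
    rw [hdiag, AddChar.map_add_eq_mul, hc, mul_comm]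
  · rintro ⟨z, c, hp⟩
    refine ⟨χ c, 0, z, stdAddChar_two_pow_four c, ?_⟩
    ext a b
    rw [phaseGate, Matrix.diagonal_apply, Matrix.smul_apply, XZGate_apply, add_zero, smul_eq_mul,
      mul_ite, mul_zero]
    refine if_ctx_congr Iff.rfl (fun hab => ?_) fun _ => rfl
    rw [hp, hab, AddChar.map_add_eq_mul, mul_comm]

lemma phaseGate_mem_cliffordLevel_iff {p : QV n → ZMod 2} {k : ℕ} :
    phaseGate p ∈ CliffordLevel n (k + 1) ↔ DegreeLE (k + 1) p := by
  induction k generalizing p with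
  | zero => exact phaseGate_mem_pauliGroup_iff
  | succ k ih =>
    calc phaseGate p ∈ CliffordLevel n (k + 2)
        ↔ ∀ u z, phaseGate (Δ_[u] p) * XZGate n u z ∈ CliffordLevel n (k + 1) := by
          simp only [mem_cliffordLevel_add_two_iff_XZGate, phaseGate_mem_unitaryGroup, true_and,
            phaseGate_conj_XZGate]
      _ ↔ ∀ u, DegreeLE (k + 1) (Δ_[u] p) := by
          simp only [mul_pauli_mem_cliffordLevel_iff (XZGate_mem_pauliGroup _ _), ih, forall_const]

end PhaseGate

section LinearStructures

variable {V W : Type*} [AddCommGroup V] [AddCommGroup W]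

/-- The linear structures of `f`: the directions `u` along which `f` is additive up to a constant,
that is, in which the derivative `w ↦ f (w + u) - f w` is constant. -/
def linearStructures (f : V → W) : AddSubgroup V where
  carrier := {u | ∃ u', ∀ w, f (w + u) = f w + u'}
  zero_mem' := ⟨0, fun w => by rw [add_zero, add_zero]⟩
  add_mem' := by
    rintro u₁ u₂ ⟨u₁', h₁⟩ ⟨u₂', h₂⟩
    exact ⟨u₁' + u₂', fun w => by rw [← add_assoc, h₂, h₁, add_assoc]⟩
  neg_mem' := by
    rintro u ⟨u', h⟩
    exact ⟨-u', fun w => by rw [eq_add_neg_iff_add_eq, ← h, neg_add_cancel_right]⟩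

lemma mem_linearStructures {f : V → W} {u : V} :
    u ∈ linearStructures f ↔ ∃ u', ∀ w, f (w + u) = f w + u' :=
  Iff.rfl

end LinearStructures

section PermutationGate

open scoped Matrix

local notation "χ" => ZMod.stdAddChar (N := 2)

variable {n : ℕ}

lemma permGate_mul_apply (f : QV n ≃ QV n) (M : QMat n) (a b : QV n) :
    (permGate n f * M) a b = M (f.symm a) b := by
  simp only [Matrix.mul_apply, permGate, ← Equiv.symm_apply_eq, ite_mul, one_mul, zero_mul,
    Finset.sum_ite_eq, Finset.mem_univ, if_true]

lemma mul_permGate_apply (f : QV n ≃ QV n) (M : QMat n) (a b : QV n) :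
    (M * permGate n f) a b = M a (f b) := by
  simp only [Matrix.mul_apply, permGate, mul_ite, mul_one, mul_zero, Finset.sum_ite_eq',
    Finset.mem_univ, if_true]

lemma permGate_mul_permGate (f g : QV n ≃ QV n) :
    permGate n f * permGate n g = permGate n (g.trans f) := by
  ext a b
  rw [mul_permGate_apply]
  rfl

lemma permGate_eq_mul_mul {f φ₁ g φ₂ : QV n ≃ QV n} (hf : ∀ v, f v = φ₁ (g (φ₂ v))) :
    permGate n f = permGate n φ₁ * permGate n g * permGate n φ₂ := by
  rw [permGate_mul_permGate, permGate_mul_permGate]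
  exact congrArg (permGate n) (Equiv.ext hf)

lemma star_permGate (f : QV n ≃ QV n) : star (permGate n f) = permGate n f.symm := by
  ext a b
  rw [Matrix.star_apply, permGate, permGate, apply_ite star, star_one, star_zero]
  exact if_congr (f.eq_symm_apply.trans eq_comm).symm rfl rfl

lemma permGate_mem_unitaryGroup (f : QV n ≃ QV n) :
    permGate n f ∈ Matrix.unitaryGroup (QV n) ℂ := by
  rw [Matrix.mem_unitaryGroup_iff, star_permGate, permGate_mul_permGate, Equiv.symm_trans_self]
  ext a b
  exact (Matrix.one_apply (i := a) (j := b)).symm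

lemma permGate_conj_apply (f : QV n ≃ QV n) (M : QMat n) (a b : QV n) :
    (permGate n f * M * star (permGate n f)) (f a) (f b) = M a b := by
  rw [star_permGate, mul_permGate_apply, permGate_mul_apply, f.symm_apply_apply,
    f.symm_apply_apply]

lemma permGate_conj_XZGate_mem_pauliGroup_iff {f : QV n ≃ QV n} {u z : QV n} :
    permGate n f * XZGate n u z * star (permGate n f) ∈ PauliGroup n ↔
      u ∈ linearStructures f ∧ DegreeLE 1 fun v => z ⬝ᵥ f.symm v := by
  rw [mem_pauliGroup_iff, mem_linearStructures, degreeLE_one_iff_dotProduct]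
  constructor
  · rintro ⟨c, u', z', -, hP⟩
    have hentry (w : QV n) :
        χ (z ⬝ᵥ w) = c * if f (w + u) = f w + u' then χ (z' ⬝ᵥ f w) else 0 := by
      rw [← smul_eq_mul, ← XZGate_apply, ← Matrix.smul_apply, ← hP, permGate_conj_apply,
        XZGate_apply, if_pos rfl]
    have hshift (w : QV n) : f (w + u) = f w + u' := by
      by_contra hw
      exact (AddChar.val_isUnit χ (z ⬝ᵥ w)).ne_zero
        ((hentry w).trans (by rw [if_neg hw, mul_zero]))
    simp only [if_pos (hshift _)] at hentry
    have hc : c = χ (z ⬝ᵥ f.symm 0) := by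
      rw [hentry, f.apply_symm_apply, dotProduct_zero, AddChar.map_zero_eq_one, mul_one]
    refine ⟨⟨u', hshift⟩, z', z ⬝ᵥ f.symm 0, fun v => ZMod.injective_stdAddChar ?_⟩
    rw [hentry, f.apply_symm_apply, AddChar.map_add_eq_mul, ← hc, mul_comm]
  · rintro ⟨⟨u', hshift⟩, z', c, hz'⟩
    refine ⟨χ c, u', z', stdAddChar_two_pow_four c, ?_⟩
    ext a b
    obtain ⟨a, rfl⟩ := f.surjective a
    obtain ⟨b, rfl⟩ := f.surjective b
    rw [permGate_conj_apply, XZGate_apply, Matrix.smul_apply, XZGate_apply, ← hshift,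
      smul_eq_mul, mul_ite, mul_zero]
    refine if_congr f.injective.eq_iff.symm ?_ rfl
    rw [← AddChar.map_add_eq_mul, add_comm c, ← hz', f.symm_apply_apply]

lemma permGate_affineEquiv_mem_cliffordLevel_two (e : QV n ≃ᵃ[ZMod 2] QV n) :
    permGate n e.toEquiv ∈ CliffordLevel n 2 := by
  refine mem_cliffordLevel_add_two_iff_XZGate.2 ⟨permGate_mem_unitaryGroup _, fun u z =>
    permGate_conj_XZGate_mem_pauliGroup_iff.2
      ⟨mem_linearStructures.2 ⟨e.linear u, fun w => ?_⟩, ?_⟩⟩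
  · rw [add_comm w, add_comm _ (e.linear u)]
    exact e.map_vadd w u
  · refine degreeLE_one_iff.2
      ⟨((dotProductEquiv (ZMod 2) (Fin n) z) ∘ₗ e.symm.linear.toLinearMap).toAddMonoidHom,
        z ⬝ᵥ e.symm 0, fun v => ?_⟩
    have hv : e.symm v = e.symm.linear v + e.symm 0 :=
      congrFun (e.symm.toAffineMap.decomp) v
    exact (congrArg (z ⬝ᵥ ·) hv).trans (dotProduct_add _ _ _)

end PermutationGate

section PiKronecker

variable {ι κ R : Type*} [Fintype ι] [CommSemiring R]

/-- The Kronecker product of a family of square matrices indexed by `κ`, with rows and columns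
indexed by `ι → κ`: the gate acting on qubit `i` by `M i`. -/
def piKronecker (M : ι → Matrix κ κ R) : Matrix (ι → κ) (ι → κ) R :=
  Matrix.of fun a b => ∏ i, M i (a i) (b i)

lemma piKronecker_apply (M : ι → Matrix κ κ R) (a b : ι → κ) :
    piKronecker M a b = ∏ i, M i (a i) (b i) :=
  rfl

lemma piKronecker_mul [DecidableEq ι] [Fintype κ] (M N : ι → Matrix κ κ R) :
    piKronecker M * piKronecker N = piKronecker fun i => M i * N i := by
  ext a b
  simp only [Matrix.mul_apply, piKronecker_apply, Finset.prod_univ_sum, Fintype.piFinset_univ,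
    Finset.prod_mul_distrib]

lemma piKronecker_one [DecidableEq κ] :
    piKronecker (fun _ : ι => (1 : Matrix κ κ R)) = 1 := by
  ext a b
  simp only [piKronecker_apply, Matrix.one_apply, Finset.prod_ite_zero, Finset.mem_univ,
    true_implies, Finset.prod_const_one, funext_iff]

lemma piKronecker_smul (c : ι → R) (M : ι → Matrix κ κ R) :
    piKronecker (fun i => c i • M i) = (∏ i, c i) • piKronecker M := by
  ext a b
  simp only [piKronecker_apply, Matrix.smul_apply, smul_eq_mul, Finset.prod_mul_distrib]

lemma star_piKronecker [StarRing R] (M : ι → Matrix κ κ R) :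
    star (piKronecker M) = piKronecker fun i => star (M i) := by
  ext a b
  simp only [Matrix.star_apply, piKronecker_apply, star_prod]

end PiKronecker

section Hadamard

open scoped Matrix

local notation "χ" => ZMod.stdAddChar (N := 2)

variable {n : ℕ}

lemma stdAddChar_two_sum {ι : Type*} (s : Finset ι) (f : ι → ZMod 2) :
    χ (∑ i ∈ s, f i) = ∏ i ∈ s, χ (f i) :=
  map_sum (χ).toAddMonoidHom f s

/-- The one-qubit gate `X^u Z^z`. -/
noncomputable def qubitXZ (u z : ZMod 2) : Matrix (ZMod 2) (ZMod 2) ℂ :=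
  Matrix.of fun a b => if a = b + u then χ (z * b) else 0

lemma piKronecker_qubitXZ (u z : QV n) :
    piKronecker (fun i => qubitXZ (u i) (z i)) = XZGate n u z := by
  ext a b
  simp only [piKronecker_apply, qubitXZ, Matrix.of_apply, XZGate_apply, Finset.prod_ite_zero,
    Finset.mem_univ, true_implies, dotProduct, stdAddChar_two_sum, funext_iff, Pi.add_apply]

lemma piKronecker_mem_cliffordLevel_two {M : Fin n → Matrix (ZMod 2) (ZMod 2) ℂ}
    (hM : ∀ i, M i ∈ Matrix.unitaryGroup (ZMod 2) ℂ)
    (hconj : ∀ i u z, ∃ (c : ℂ) (u' z' : ZMod 2),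
      c ^ 4 = 1 ∧ M i * qubitXZ u z * star (M i) = c • qubitXZ u' z') :
    piKronecker M ∈ CliffordLevel n 2 := by
  refine mem_cliffordLevel_add_two_iff_XZGate.2 ⟨?_, fun u z => ?_⟩
  · simp only [Matrix.mem_unitaryGroup_iff, star_piKronecker, piKronecker_mul,
      Matrix.mem_unitaryGroup_iff.1 (hM _), piKronecker_one]
  · choose c u' z' hc h using fun i => hconj i (u i) (z i)
    refine mem_pauliGroup_iff.2 ⟨∏ i, c i, u', z', ?_, ?_⟩
    · rw [← Finset.prod_pow]
      exact Finset.prod_eq_one fun i _ => hc i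
    · simp only [← piKronecker_qubitXZ, star_piKronecker, piKronecker_mul, h, piKronecker_smul]

/-- The one-qubit Hadamard gate. -/
noncomputable def hadamard : Matrix (ZMod 2) (ZMod 2) ℂ :=
  Matrix.of fun a b => (√2 : ℂ)⁻¹ * χ (a * b)

lemma hadamard_apply (a b : ZMod 2) : hadamard a b = (√2 : ℂ)⁻¹ * χ (a * b) := rfl

lemma hadamard_mul_self : hadamard * hadamard = 1 := by
  ext a b
  have hsqrt : (√2 : ℂ)⁻¹ * (√2 : ℂ)⁻¹ * 2 = 1 := by
    rw [← mul_inv, ← Complex.ofReal_mul, Real.mul_self_sqrt zero_le_two, Complex.ofReal_ofNat,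
      inv_mul_cancel₀ two_ne_zero]
  calc (hadamard * hadamard) a b
      = (√2 : ℂ)⁻¹ * (√2 : ℂ)⁻¹ * ∑ c, χ (c * (a + b)) := by
        rw [Matrix.mul_apply, Finset.mul_sum]
        refine Finset.sum_congr rfl fun c _ => ?_
        rw [hadamard_apply, hadamard_apply, mul_mul_mul_comm, ← AddChar.map_add_eq_mul, mul_add,
          mul_comm a]
    _ = if a + b = 0 then 1 else 0 := by
        rw [AddChar.sum_mulShift _ (ZMod.isPrimitive_stdAddChar 2), ZMod.card,
          Nat.cast_ite, mul_ite, Nat.cast_ofNat, hsqrt, Nat.cast_zero, mul_zero]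
    _ = (1 : Matrix (ZMod 2) (ZMod 2) ℂ) a b := by
        simp only [CharTwo.add_eq_zero, Matrix.one_apply]

lemma star_hadamard : star hadamard = hadamard := by
  ext a b
  rw [Matrix.star_apply, hadamard_apply, hadamard_apply, star_mul', star_stdAddChar_two, star_inv₀,
    ← starRingEnd_apply, Complex.conj_ofReal, mul_comm a]

lemma hadamard_mul_qubitXZ (u z : ZMod 2) :
    hadamard * qubitXZ u z = χ (u * z) • qubitXZ z u * hadamard := by
  ext a b
  have hshift (c : ZMod 2) : a = c + z ↔ a + z = c := CharTwo.eq_add_iff_add_eq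
  simp only [Matrix.mul_apply, Matrix.smul_apply, smul_eq_mul, qubitXZ, Matrix.of_apply, hshift,
    hadamard_apply, mul_ite, ite_mul, mul_zero, zero_mul, Finset.sum_ite_eq, Finset.sum_ite_eq',
    Finset.mem_univ, if_true]
  have hphase : a * (b + u) + z * b = u * z + u * (a + z) + (a + z) * b := by
    linear_combination -(u * z) * CharTwo.two_eq_zero (R := ZMod 2)
  rw [mul_assoc, ← AddChar.map_add_eq_mul, hphase, AddChar.map_add_eq_mul, AddChar.map_add_eq_mul]
  ring

/-- The gate applying a Hadamard gate to each of the qubits in `T`. -/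
noncomputable def hadamardOn (T : Finset (Fin n)) : QMat n :=
  piKronecker fun i => if i ∈ T then hadamard else 1

lemma hadamardOn_mul_self (T : Finset (Fin n)) : hadamardOn T * hadamardOn T = 1 := by
  have hT (i : Fin n) : (if i ∈ T then hadamard else 1) * (if i ∈ T then hadamard else 1) = 1 := by
    split_ifs
    exacts [hadamard_mul_self, one_mul 1]
  simp only [hadamardOn, piKronecker_mul, hT, piKronecker_one]

lemma hadamardOn_mem_cliffordLevel_two (T : Finset (Fin n)) :
    hadamardOn T ∈ CliffordLevel n 2 := by
  refine piKronecker_mem_cliffordLevel_two (fun i => ?_) fun i u z => ?_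
  · split_ifs
    · rw [Matrix.mem_unitaryGroup_iff, star_hadamard, hadamard_mul_self]
    · exact one_mem _
  · split_ifs
    · refine ⟨χ (u * z), z, u, stdAddChar_two_pow_four _, ?_⟩
      rw [star_hadamard, hadamard_mul_qubitXZ, mul_assoc, hadamard_mul_self, mul_one]
    · exact ⟨1, u, z, one_pow 4, by rw [one_mul, star_one, mul_one, one_smul]⟩

lemma hadamardOn_apply_eq_zero {T : Finset (Fin n)} {a b : QV n} {i : Fin n} (hi : i ∉ T)
    (hab : a i ≠ b i) : hadamardOn T a b = 0 :=
  Finset.prod_eq_zero (Finset.mem_univ i) (by simp only [if_neg hi, Matrix.one_apply_ne hab])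

lemma hadamardOn_apply_add {T : Finset (Fin n)} {x : QV n} (hx : ∀ i ∉ T, x i = 0) (a b : QV n) :
    hadamardOn T a (b + x) = hadamardOn T a b * χ (a ⬝ᵥ x) := by
  rw [dotProduct, stdAddChar_two_sum, hadamardOn, piKronecker_apply, piKronecker_apply,
    ← Finset.prod_mul_distrib]
  refine Finset.prod_congr rfl fun i _ => ?_
  split_ifs with hi
  · rw [hadamard_apply, hadamard_apply, Pi.add_apply, mul_add, AddChar.map_add_eq_mul, mul_assoc]
  · rw [Pi.add_apply, hx i hi, add_zero, mul_zero, AddChar.map_zero_eq_one, mul_one]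

end Hadamard

section Shear

open scoped Matrix fwdDiff

variable {n k : ℕ} {T : Finset (Fin n)} {h : QV n → QV n}

/-- `v ↦ v + h v` is a shear with target set `T`: the displacement `h v` is supported on the
qubits in `T` and depends only on the qubits outside `T`. -/
structure IsShear (T : Finset (Fin n)) (h : QV n → QV n) : Prop where
  dependsOn : DependsOn h (↑T)ᶜ
  apply_eq_zero : ∀ v, ∀ i ∉ T, h v i = 0

namespace IsShear

lemma apply_add (hh : IsShear T h) {x : QV n} (hx : ∀ i ∉ T, x i = 0) (v : QV n) :
    h (v + x) = h v :=
  hh.dependsOn fun i hi => by rw [Pi.add_apply, hx i hi, add_zero]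

lemma involutive (hh : IsShear T h) : Function.Involutive fun v => v + h v := fun v => by
  beta_reduce
  rw [hh.apply_add (hh.apply_eq_zero v), add_assoc, ZModModule.add_self, add_zero]

/-- The permutation `v ↦ v + h v` of `𝔽₂ⁿ` given by a shear. -/
def toPerm (hh : IsShear T h) : Equiv.Perm (QV n) :=
  hh.involutive.toPerm

lemma toPerm_apply (hh : IsShear T h) (v : QV n) : hh.toPerm v = v + h v := rfl

lemma hadamardOn_mul_permGate (hh : IsShear T h) :
    hadamardOn T * permGate n hh.toPerm = phaseGate (fun v => v ⬝ᵥ h v) * hadamardOn T := by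
  ext a b
  rw [mul_permGate_apply, toPerm_apply, hadamardOn_apply_add (hh.apply_eq_zero b), phaseGate,
    Matrix.diagonal_mul, mul_comm]
  by_cases hab : ∀ i ∉ T, a i = b i
  · rw [hh.dependsOn hab]
  · push Not at hab
    obtain ⟨i, hi, hab⟩ := hab
    rw [hadamardOn_apply_eq_zero hi hab, mul_zero, mul_zero]

lemma permGate_eq (hh : IsShear T h) :
    permGate n hh.toPerm = hadamardOn T * phaseGate (fun v => v ⬝ᵥ h v) * hadamardOn T := by
  rw [mul_assoc, ← hadamardOn_mul_permGate, ← mul_assoc, hadamardOn_mul_self, one_mul]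

lemma isSemiClifford (hh : IsShear T h) : IsSemiClifford n (permGate n hh.toPerm) :=
  ⟨hadamardOn T, phaseGate fun v => v ⬝ᵥ h v, hadamardOn T, hadamardOn_mem_cliffordLevel_two T,
    hadamardOn_mem_cliffordLevel_two T, fun _ _ => Matrix.diagonal_apply_ne _, hh.permGate_eq⟩

lemma degreeLE_dotProduct_iff (hh : IsShear T h) :
    DegreeLE (k + 1) (fun v => v ⬝ᵥ h v) ↔ DegreeLE k h := by
  constructor
  · refine fun hdeg => degreeLE_pi_iff.2 fun i => ?_
    by_cases hi : i ∈ T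
    · have hΔ : Δ_[Pi.single i 1] (fun v => v ⬝ᵥ h v) = fun v => h v i := by
        have hsupp : ∀ j ∉ T, (Pi.single i 1 : QV n) j = 0 := fun j hj =>
          Pi.single_eq_of_ne (ne_of_mem_of_not_mem hi hj).symm 1
        funext v
        rw [fwdDiff, hh.apply_add hsupp, add_dotProduct, add_sub_cancel_left,
          single_one_dotProduct]
      exact hΔ ▸ hdeg _
    · simpa only [hh.apply_eq_zero _ i hi] using DegreeLE.const k 0
  · intro hdeg
    have hsum : (fun v => v ⬝ᵥ h v) = ∑ i, (fun v => v i) * fun v => h v i := by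
      funext v
      simp only [dotProduct, Finset.sum_apply, Pi.mul_apply]
    rw [hsum, add_comm]
    exact DegreeLE.sum _ fun i _ =>
      (DegreeLE.of_addMonoidHom (Pi.evalAddMonoidHom _ i)).mul (degreeLE_pi_iff.1 hdeg i)

lemma mem_cliffordLevel_iff (hh : IsShear T h) :
    permGate n hh.toPerm ∈ CliffordLevel n (k + 2) ↔ DegreeLE (k + 1) h := by
  have hT := hadamardOn_mem_cliffordLevel_two T
  rw [hh.permGate_eq, clifford_mul_mul_mem_cliffordLevel_iff hT hT, phaseGate_mem_cliffordLevel_iff,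
    hh.degreeLE_dotProduct_iff]

end IsShear

end Shear

section SemiCliffordPermutation

open scoped Matrix

variable {n : ℕ} {f : QV n ≃ QV n}

lemma conj_star_conj_of_commute {R : Type*} [Monoid R] [StarMul R] {u v d x : R}
    (hu : u ∈ unitary R) (hv : v ∈ unitary R) (hudv : u * d * v ∈ unitary R) (hdx : Commute d x) :
    u * d * v * (star v * x * v) * star (u * d * v) = u * x * star u :=
  calc u * d * v * (star v * x * v) * star (u * d * v)
      = u * d * (v * star v) * x * v * star (u * d * v) := by simp only [mul_assoc]
    _ = u * (d * x) * v * star (u * d * v) := by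
        rw [Unitary.mul_star_self_of_mem hv, mul_one, mul_assoc u d x]
    _ = u * x * (star u * u) * d * v * star (u * d * v) := by
        rw [hdx.eq, Unitary.star_mul_self_of_mem hu, mul_one, mul_assoc u x d]
    _ = u * x * star u := by
        rw [← mul_one (u * x * star u), ← Unitary.mul_star_self_of_mem hudv]
        simp only [mul_assoc]

lemma IsDiagonal.commute {d d' : QMat n} (hd : IsDiagonal n d) (hd' : IsDiagonal n d') :
    Commute d d' := by
  rw [← Matrix.IsDiag.diagonal_diag fun a b => hd a b,
    ← Matrix.IsDiag.diagonal_diag fun a b => hd' a b]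
  exact Matrix.commute_diagonal _ _

lemma isDiagonal_XZGate_zero (z : QV n) : IsDiagonal n (XZGate n 0 z) := fun a b hab => by
  rw [XZGate_apply, add_zero, if_neg hab]

lemma isDiagonal_of_forall_commute {M : QMat n} (hM : ∀ z, Commute M (XZGate n 0 z)) :
    IsDiagonal n M := by
  intro a b hab
  obtain ⟨i, hi⟩ := Function.ne_iff.1 hab
  by_contra hne
  have hentry := congrFun (congrFun (hM (Pi.single i 1)) a) b
  rw [mul_XZGate_apply, XZGate_mul_apply, add_zero, add_zero, single_one_dotProduct,
    single_one_dotProduct, mul_comm] at hentry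
  exact hi (ZMod.injective_stdAddChar (mul_right_cancel₀ hne hentry)).symm

lemma exists_star_conj_XZGate_zero_eq {φ₁ d φ₂ : QMat n} (hφ₁ : φ₁ ∈ CliffordLevel n 2)
    (hφ₂ : φ₂ ∈ CliffordLevel n 2) (hd : IsDiagonal n d) (hf : permGate n f = φ₁ * d * φ₂)
    (z : QV n) :
    ∃ c : ℂ, ∃ u ∈ linearStructures f, ∃ y, star φ₂ * XZGate n 0 z * φ₂ = c • XZGate n u y := by
  have hpauli := (star_mem_cliffordLevel_two hφ₂).2 _ (XZGate_mem_pauliGroup 0 z)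
  rw [star_star] at hpauli
  obtain ⟨c, u, y, hc, hP⟩ := mem_pauliGroup_iff.1 hpauli
  have hconj : permGate n f * (c • XZGate n u y) * star (permGate n f) ∈ PauliGroup n := by
    rw [← hP, hf, conj_star_conj_of_commute hφ₁.1 hφ₂.1 (hf ▸ permGate_mem_unitaryGroup f)
      (hd.commute (isDiagonal_XZGate_zero z))]
    exact hφ₁.2 _ (XZGate_mem_pauliGroup 0 z)
  have hc₀ : c ≠ 0 := fun h => by simp [h] at hc
  have hconj' := smul_mem_pauliGroup (c := c⁻¹) (by rw [inv_pow, hc, inv_one]) hconj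
  rw [Matrix.mul_smul, Matrix.smul_mul, inv_smul_smul₀ hc₀] at hconj'
  exact ⟨c, u, (permGate_conj_XZGate_mem_pauliGroup_iff.1 hconj').1, y, hP⟩

lemma commute_XZGate_zero {u y ζ : QV n} (hζ : ζ ⬝ᵥ u = 0) :
    Commute (XZGate n u y) (XZGate n 0 ζ) := by
  rw [Commute, SemiconjBy, XZGate_mul_XZGate, XZGate_mul_XZGate, hζ, dotProduct_zero, add_comm u,
    add_comm y]

namespace IsSemiClifford

lemma permGate_conj_XZGate_zero_mem_pauliGroup (hf : IsSemiClifford n (permGate n f)) {ζ : QV n}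
    (hζ : ∀ u ∈ linearStructures f, ζ ⬝ᵥ u = 0) :
    permGate n f * XZGate n 0 ζ * star (permGate n f) ∈ PauliGroup n := by
  obtain ⟨φ₁, d, φ₂, hφ₁, hφ₂, hd, hf⟩ := hf
  set E := φ₂ * XZGate n 0 ζ * star φ₂
  have hEZ (z : QV n) : Commute E (XZGate n 0 z) := by
    obtain ⟨c, u, hu, y, hP⟩ := exists_star_conj_XZGate_zero_eq hφ₁ hφ₂ hd hf z
    have hZ : φ₂ * (c • XZGate n u y) * star φ₂ = XZGate n 0 z := by
      simpa only [hP, star_star] using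
        star_mul_conj_mul (star_mem_cliffordLevel_two hφ₂).1 (XZGate n 0 z)
    have hcomm := ((commute_XZGate_zero (y := y) (hζ u hu)).smul_left c).symm
    exact hZ ▸ hcomm.map (Unitary.conjStarAlgAut ℂ (QMat n) ⟨φ₂, hφ₂.1⟩)
  have hE_diag : IsDiagonal n E := isDiagonal_of_forall_commute hEZ
  have hstar : star φ₂ * E * φ₂ = XZGate n 0 ζ := star_mul_conj_mul hφ₂.1 _
  rw [← hstar, hf, conj_star_conj_of_commute hφ₁.1 hφ₂.1 (hf ▸ permGate_mem_unitaryGroup f)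
    (hd.commute hE_diag)]
  exact hφ₁.2 _ (hφ₂.2 _ (XZGate_mem_pauliGroup 0 ζ))

end IsSemiClifford

end SemiCliffordPermutation

section NormalForm

open scoped Matrix

variable {n : ℕ}

lemma exists_linearEquiv_isShear {A : Submodule (ZMod 2) (QV n)} (e : QV n ≃ QV n)
    (hA : ∀ u ∈ A, ∀ w, e (w + u) = e w + e u) (Q : QV n →ₗ[ZMod 2] QV n ⧸ A)
    (hQ : ∀ w, Q (e w) = A.mkQ w) :
    ∃ (β γ : QV n ≃ₗ[ZMod 2] QV n) (T : Finset (Fin n)) (h : QV n → QV n),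
      IsShear T h ∧ ∀ v, e (β v) = γ (v + h v) := by
  let eA : A →ₗ[ZMod 2] QV n :=
    (AddMonoidHom.mk' (fun u : A => e u) fun u v => hA v v.2 u).toZModLinearMap 2
  obtain ⟨G, hGA, hG⟩ := exists_linearEquiv_extend_lift e eA (fun _ => rfl) Q hQ
  obtain ⟨β, T, hβ⟩ := exists_adapted_linearEquiv A
  refine ⟨β, β.trans G, T, fun v => β.symm (G.symm (e (β v)) - β v), ⟨?_, ?_⟩, fun v => ?_⟩
  · intro v v' hv
    obtain ⟨x, rfl⟩ : ∃ x, v' = v + x := ⟨v' - v, (add_sub_cancel v v').symm⟩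
    have hx : β x ∈ A := (hβ x).2 fun i hi => left_eq_add.1 (hv i hi)
    simp only [map_add, hA _ hx, ← hGA _ hx, LinearEquiv.symm_apply_apply, add_sub_add_right_eq_sub]
  · intro v i hi
    refine (hβ _).1 ?_ i hi
    rw [β.apply_symm_apply]
    exact hG (β v)
  · rw [LinearEquiv.trans_apply, map_add, β.apply_symm_apply, add_sub_cancel, G.apply_symm_apply]

namespace IsSemiClifford

variable {f : QV n ≃ QV n}

lemma exists_dual_eq (hf : IsSemiClifford n (permGate n f)) {φ : Module.Dual (ZMod 2) (QV n)}
    (hφ : ∀ u ∈ linearStructures f, φ u = 0) :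
    ∃ ψ : Module.Dual (ZMod 2) (QV n), ∀ w, φ w = ψ (f w - f 0) := by
  obtain ⟨ζ, hζ⟩ := exists_eq_dotProduct φ
  simp only [hζ] at hφ ⊢
  have hpauli := hf.permGate_conj_XZGate_zero_mem_pauliGroup hφ
  obtain ⟨g, c, hg⟩ := degreeLE_one_iff.1 (permGate_conj_XZGate_mem_pauliGroup_iff.1 hpauli).2
  refine ⟨g.toZModLinearMap 2, fun w => ?_⟩
  have hgf (w : QV n) : ζ ⬝ᵥ w = g (f w) + c := by rw [← hg, f.symm_apply_apply]
  calc ζ ⬝ᵥ w = ζ ⬝ᵥ w - ζ ⬝ᵥ 0 := by rw [dotProduct_zero, sub_zero]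
    _ = g (f w) - g (f 0) := by rw [hgf, hgf, add_sub_add_right_eq_sub]
    _ = g (f w - f 0) := (map_sub g _ _).symm

theorem exists_affineEquiv_isShear (hf : IsSemiClifford n (permGate n f)) :
    ∃ (α γ : QV n ≃ᵃ[ZMod 2] QV n) (T : Finset (Fin n)) (h : QV n → QV n) (hh : IsShear T h),
      ∀ v, f v = γ (hh.toPerm (α v)) := by
  let A := (linearStructures f).toZModSubmodule 2
  let e : QV n ≃ QV n := f.trans (Equiv.subRight (f 0))
  have hA : ∀ u ∈ A, ∀ w, e (w + u) = e w + e u := by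
    rintro u ⟨u', hu⟩ w
    have hu₀ := hu 0
    rw [zero_add] at hu₀
    calc f (w + u) - f 0 = f w - f 0 + (f 0 + u' - f 0) := by rw [hu]; abel
      _ = f w - f 0 + (f u - f 0) := by rw [hu₀]
  obtain ⟨Q, hQ⟩ : ∃ Q : QV n →ₗ[ZMod 2] QV n ⧸ A, ∀ v, Q v = A.mkQ (e.symm v) := by
    refine exists_linearMap_eq_of_forall_dual fun φ => ?_
    obtain ⟨ψ, hψ⟩ := hf.exists_dual_eq (φ := φ ∘ₗ A.mkQ) fun u hu => by
      rw [LinearMap.comp_apply, A.mkQ_apply, (Submodule.Quotient.mk_eq_zero A).2 hu, map_zero]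
    exact ⟨ψ, fun v => (hψ _).trans (congrArg ψ (e.apply_symm_apply v))⟩
  obtain ⟨β, γ, T, h, hh, hβ⟩ := exists_linearEquiv_isShear e hA Q fun w => by
    rw [hQ, e.symm_apply_apply]
  refine ⟨β.symm.toAffineEquiv, γ.toAffineEquiv.trans (AffineEquiv.constVAdd _ _ (f 0)), T, h, hh,
    fun v => ?_⟩
  calc f v = f 0 + e (β (β.symm v)) := by
        rw [β.apply_symm_apply]; exact (add_sub_cancel (f 0) (f v)).symm
    _ = f 0 + γ (hh.toPerm (β.symm v)) := by rw [hβ, hh.toPerm_apply]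

end IsSemiClifford

end NormalForm

section Monomials

open scoped fwdDiff

variable {n k : ℕ} {p : QV n → ZMod 2} {S : Finset (Fin n)}

lemma sum_powerset_sum_powerset {α R : Type*} [Ring R] [CharP R 2] (s : Finset α)
    (f : Finset α → R) : ∑ t ∈ s.powerset, ∑ u ∈ t.powerset, f u = f s := by
  classical
  induction s using Finset.induction_on generalizing f with
  | empty => simp only [Finset.powerset_empty, Finset.sum_singleton]
  | insert a s ha ih =>
    have hsplit : ∀ t ∈ s.powerset, ∑ u ∈ (insert a t).powerset, f u =
        ∑ u ∈ t.powerset, f u + ∑ u ∈ t.powerset, f (insert a u) := fun t ht =>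
      Finset.sum_powerset_insert (fun hat => ha (Finset.mem_powerset.1 ht hat)) f
    rw [Finset.sum_powerset_insert ha, Finset.sum_congr rfl hsplit, Finset.sum_add_distrib,
      ← add_assoc, CharTwo.add_self_eq_zero, zero_add, ih fun u => f (insert a u)]

lemma zmod_two_eq_one_of_ne_zero {x : ZMod 2} (hx : x ≠ 0) : x = 1 :=
  Fin.eq_one_of_ne_zero x hx

lemma stdBasis_eq_single (i : Fin n) : stdBasis n i = Pi.single i 1 := by
  funext j
  rw [stdBasis, Pi.single_apply]

lemma sum_stdBasis_filter (v : QV n) : ∑ i with v i ≠ 0, stdBasis n i = v := by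
  conv_rhs => rw [← Finset.univ_sum_single v]
  rw [Finset.sum_filter]
  refine Finset.sum_congr rfl fun i _ => ?_
  split_ifs with hi
  · rw [stdBasis_eq_single, zmod_two_eq_one_of_ne_zero hi]
  · rw [not_not.1 hi, Pi.single_zero]

lemma eq_sum_mlCoeff (p : QV n → ZMod 2) (v : QV n) :
    p v = ∑ S, mlCoeff n p S * ∏ i ∈ S, v i := by
  have hprod (S : Finset (Fin n)) :
      ∏ i ∈ S, v i = if S ∈ (Finset.univ.filter fun i => v i ≠ 0).powerset then 1 else 0 := by
    split_ifs with hS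
    · exact Finset.prod_eq_one fun i hi => zmod_two_eq_one_of_ne_zero
        (Finset.mem_filter.1 (Finset.mem_powerset.1 hS hi)).2
    · obtain ⟨i, hi, hiv⟩ := Finset.not_subset.1 (Finset.mem_powerset.not.1 hS)
      exact Finset.prod_eq_zero hi (by simpa using hiv)
  simp only [hprod, mul_ite, mul_one, mul_zero, Finset.sum_ite_mem, Finset.univ_inter, mlCoeff]
  rw [sum_powerset_sum_powerset _ fun R => p (∑ i ∈ R, stdBasis n i), sum_stdBasis_filter]

lemma mlCoeff_zero (S : Finset (Fin n)) : mlCoeff n (fun _ => 0) S = 0 :=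
  Finset.sum_const_zero

lemma mlCoeff_insert (p : QV n → ZMod 2) {i : Fin n} (hi : i ∉ S) :
    mlCoeff n p (insert i S) = mlCoeff n (Δ_[stdBasis n i] p) S := by
  rw [mlCoeff, Finset.sum_powerset_insert hi, ← Finset.sum_add_distrib]
  refine Finset.sum_congr rfl fun R hR => ?_
  rw [Finset.sum_insert fun hiR => hi (Finset.mem_powerset.1 hR hiR), fwdDiff, CharTwo.sub_eq_add,
    add_comm, add_comm (stdBasis n i)]

lemma mlCoeff_eq_zero_of_fwdDiff_eq_zero {i : Fin n} (hi : i ∈ S)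
    (hp : ∀ v, p (v + stdBasis n i) = p v) : mlCoeff n p S = 0 := by
  have hΔ : Δ_[stdBasis n i] p = fun _ => 0 := funext fun v => sub_eq_zero.2 (hp v)
  rw [← Finset.insert_erase hi, mlCoeff_insert p (Finset.notMem_erase i S), hΔ, mlCoeff_zero]

lemma DegreeLE.mlCoeff_eq_zero (hp : DegreeLE k p) (hS : k < S.card) : mlCoeff n p S = 0 := by
  induction k generalizing p S with
  | zero =>
    obtain ⟨i, hi⟩ := Finset.card_pos.1 hS
    exact mlCoeff_eq_zero_of_fwdDiff_eq_zero hi fun v => hp _ v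
  | succ k ih =>
    obtain ⟨i, hi⟩ := Finset.card_pos.1 (Nat.zero_lt_of_lt hS)
    rw [← Finset.insert_erase hi, mlCoeff_insert p (Finset.notMem_erase i S)]
    exact ih (hp _) (by rw [Finset.card_erase_of_mem hi]; lia)

lemma mlCoeff_eq_zero_of_dependsOn {s : Set (Fin n)} (hp : DependsOn p s) {i : Fin n} (hi : i ∈ S)
    (his : i ∉ s) : mlCoeff n p S = 0 := by
  refine mlCoeff_eq_zero_of_fwdDiff_eq_zero hi fun v => hp fun j hj => ?_
  rw [stdBasis_eq_single, Pi.add_apply, Pi.single_eq_of_ne (ne_of_mem_of_not_mem hj his), add_zero]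

end Monomials

section MultiControlledNot

variable {n k : ℕ} {T : Finset (Fin n)} {h : QV n → QV n} {L : List (Finset (Fin n) × Fin n)}

lemma mcxFun_eq_add_single (C : Finset (Fin n)) (t : Fin n) (v : QV n) :
    mcxFun n C t v = v + Pi.single t (∏ i ∈ C, v i) := by
  funext j
  rw [mcxFun, Pi.add_apply, Pi.single_apply]
  split_ifs
  exacts [rfl, (add_zero _).symm]

/-- The displacement `v ↦ ∑ (∏_{i ∈ C} vᵢ) e_t`, summed over the pairs `(C, t)` in `L`, of a
mismatch-free product of multi-controlled NOT gates. -/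
def mcxDisplacement (L : List (Finset (Fin n) × Fin n)) (v : QV n) : QV n :=
  (L.map fun g => Pi.single g.2 (∏ i ∈ g.1, v i)).sum

lemma mcxDisplacement_cons (g : Finset (Fin n) × Fin n) (v : QV n) :
    mcxDisplacement (g :: L) v = Pi.single g.2 (∏ i ∈ g.1, v i) + mcxDisplacement L v :=
  List.sum_cons

lemma mcxDisplacement_congr {v w : QV n} (hvw : ∀ g ∈ L, ∀ i ∈ g.1, v i = w i) :
    mcxDisplacement L v = mcxDisplacement L w :=
  congrArg List.sum <| List.map_congr_left fun g hg =>
    congrArg (Pi.single g.2) (Finset.prod_congr rfl (hvw g hg))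

lemma foldl_mcxFun (hL : ∀ g ∈ L, ∀ g' ∈ L, g.2 ∉ g'.1) (v : QV n) :
    L.foldl (fun w g => mcxFun n g.1 g.2 w) v = v + mcxDisplacement L v := by
  induction L generalizing v with
  | nil => exact (add_zero v).symm
  | cons g L ih =>
    have hcontrols : mcxDisplacement L (mcxFun n g.1 g.2 v) = mcxDisplacement L v := by
      refine mcxDisplacement_congr fun g' hg' i hi => if_neg ?_
      exact ne_of_mem_of_not_mem hi (hL g List.mem_cons_self g' (List.mem_cons_of_mem g hg'))
    rw [List.foldl_cons, ih fun g₁ h₁ g₂ h₂ => hL g₁ (.tail g h₁) g₂ (.tail g h₂), hcontrols,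
      mcxFun_eq_add_single, mcxDisplacement_cons, add_assoc]

lemma isShear_mcxDisplacement (hL : ∀ g ∈ L, ∀ g' ∈ L, g.2 ∉ g'.1) :
    IsShear (L.map Prod.snd).toFinset (mcxDisplacement L) := by
  constructor
  · refine fun v w hvw => mcxDisplacement_congr fun g hg i hi => hvw i fun hiT => ?_
    obtain ⟨g', hg', rfl⟩ := List.mem_map.1 (List.mem_toFinset.1 hiT)
    exact hL g' hg' g hg hi
  · intro v i hi
    rw [mcxDisplacement, Pi.list_sum_apply, List.map_map]
    refine List.sum_eq_zero fun x hx => ?_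
    obtain ⟨g, hg, rfl⟩ := List.mem_map.1 hx
    refine Pi.single_eq_of_ne (fun hig => hi ?_) _
    exact List.mem_toFinset.2 (List.mem_map.2 ⟨g, hg, hig.symm⟩)

lemma degreeLE_mcxDisplacement (hL : ∀ g ∈ L, g.1.card ≤ k) : DegreeLE k (mcxDisplacement L) := by
  induction L with
  | nil => exact DegreeLE.const k 0
  | cons g L ih =>
    have hmonomial : DegreeLE g.1.card (∏ i ∈ g.1, fun v : QV n => v i) :=
      DegreeLE.prod _ fun i _ => DegreeLE.of_addMonoidHom (Pi.evalAddMonoidHom (fun _ => ZMod 2) i)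
    have hgate := (hmonomial.mono (hL g List.mem_cons_self)).map
      (AddMonoidHom.single (fun _ : Fin n => ZMod 2) g.2)
    convert hgate.add (ih fun g' hg' => hL g' (.tail g hg')) using 1
    funext v
    simp only [mcxDisplacement_cons, Pi.add_apply, Function.comp_apply, Finset.prod_apply,
      AddMonoidHom.single_apply]

/-- The multi-controlled NOT gates `(C, t)` for which the monomial `∏_{i ∈ C} vᵢ` occurs in the
`t`-th component of `h`. -/
noncomputable def mcxList (h : QV n → QV n) : List (Finset (Fin n) × Fin n) :=
  (Finset.univ.filter fun g : Finset (Fin n) × Fin n =>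
    mlCoeff n (fun v => h v g.2) g.1 ≠ 0).toList

lemma mem_mcxList {g : Finset (Fin n) × Fin n} :
    g ∈ mcxList h ↔ mlCoeff n (fun v => h v g.2) g.1 ≠ 0 := by
  rw [mcxList, Finset.mem_toList, Finset.mem_filter, and_iff_right (Finset.mem_univ g)]

lemma mcxDisplacement_mcxList (h : QV n → QV n) : mcxDisplacement (mcxList h) = h := by
  funext v
  have hcoeff (c m : ZMod 2) (t : Fin n) :
      (if c ≠ 0 then Pi.single t m else 0 : QV n) = Pi.single t (c * m) := by
    split_ifs with hc
    · rw [zmod_two_eq_one_of_ne_zero hc, one_mul]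
    · rw [not_not.1 hc, zero_mul, Pi.single_zero]
  calc mcxDisplacement (mcxList h) v
      = ∑ g : Finset (Fin n) × Fin n,
          Pi.single g.2 (mlCoeff n (fun w => h w g.2) g.1 * ∏ i ∈ g.1, v i) := by
        simp only [mcxDisplacement, mcxList, Finset.sum_map_toList, Finset.sum_filter, hcoeff]
    _ = ∑ t, Pi.single t (∑ C, mlCoeff n (fun w => h w t) C * ∏ i ∈ C, v i) := by
        rw [Fintype.sum_prod_type_right]
        exact Finset.sum_congr rfl fun t _ =>
          (map_sum (AddMonoidHom.single (fun _ => ZMod 2) t) _ _).symm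
    _ = ∑ t, Pi.single t (h v t) := by simp only [← eq_sum_mlCoeff]
    _ = h v := Finset.univ_sum_single (h v)

lemma card_le_of_mem_mcxList (hh : DegreeLE k h) {g : Finset (Fin n) × Fin n}
    (hg : g ∈ mcxList h) : g.1.card ≤ k :=
  not_lt.1 fun hlt => mem_mcxList.1 hg ((degreeLE_pi_iff.1 hh g.2).mlCoeff_eq_zero hlt)

namespace IsShear

variable {g : Finset (Fin n) × Fin n}

lemma target_mem (hh : IsShear T h) (hg : g ∈ mcxList h) : g.2 ∈ T := by
  by_contra hgT
  refine mem_mcxList.1 hg ?_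
  simp only [hh.apply_eq_zero _ _ hgT, mlCoeff_zero]

lemma control_notMem (hh : IsShear T h) (hg : g ∈ mcxList h) {i : Fin n} (hi : i ∈ g.1) :
    i ∉ T := fun hiT =>
  mem_mcxList.1 hg <| mlCoeff_eq_zero_of_dependsOn
    (fun _ _ hvw => congrFun (hh.dependsOn hvw) g.2) hi fun hiT' => hiT' hiT

lemma mismatchFree_mcxList (hh : IsShear T h) : ∀ g ∈ mcxList h, ∀ g' ∈ mcxList h, g.2 ∉ g'.1 :=
  fun _ hg _ hg' hgg' => hh.control_notMem hg' hgg' (hh.target_mem hg)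

end IsShear

end MultiControlledNot

/-- For `k ≥ 1`, a permutation gate `π` is a semi-Clifford element of
`𝒞ₖ₊₁` iff `π = φ₁ μ φ₂` for Clifford permutation gates `φ₁, φ₂` and a mismatch-free
product `μ` of multi-controlled NOT gates each having at most `k` controls. -/
theorem stmt19 (n k : ℕ) (hn : 1 ≤ n) (hk : 1 ≤ k) (f : QV n ≃ QV n) :
    (IsSemiClifford n (permGate n f) ∧ permGate n f ∈ CliffordLevel n (k + 1)) ↔
    (∃ (φ₁ φ₂ : QV n ≃ QV n) (L : List (Finset (Fin n) × Fin n)),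
      permGate n φ₁ ∈ CliffordLevel n 2 ∧
      permGate n φ₂ ∈ CliffordLevel n 2 ∧
      (∀ g ∈ L, g.2 ∉ g.1) ∧
      (∀ g ∈ L, ∀ g' ∈ L, g.2 ∉ g'.1) ∧
      (∀ g ∈ L, g.1.card ≤ k) ∧
      (∀ v : QV n, f v = φ₁ (L.foldl (fun w g => mcxFun n g.1 g.2 w) (φ₂ v)))) := by
  obtain ⟨k, rfl⟩ := Nat.exists_eq_add_of_le' hk
  constructor
  · rintro ⟨hsemi, hlevel⟩
    obtain ⟨α, γ, T, h, hh, hf⟩ := hsemi.exists_affineEquiv_isShear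
    have hα := permGate_affineEquiv_mem_cliffordLevel_two α
    have hγ := permGate_affineEquiv_mem_cliffordLevel_two γ
    rw [permGate_eq_mul_mul (φ₁ := γ.toEquiv) (φ₂ := α.toEquiv) hf,
      clifford_mul_mul_mem_cliffordLevel_iff hγ hα, hh.mem_cliffordLevel_iff] at hlevel
    have hmismatch := hh.mismatchFree_mcxList
    refine ⟨γ.toEquiv, α.toEquiv, mcxList h, hγ, hα, fun g hg => hmismatch g hg g hg, hmismatch,
      fun g => card_le_of_mem_mcxList hlevel, fun v => ?_⟩
    rw [foldl_mcxFun hmismatch, mcxDisplacement_mcxList]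
    exact hf v
  · rintro ⟨φ₁, φ₂, L, hφ₁, hφ₂, -, hL, hcard, hf⟩
    have hshear := isShear_mcxDisplacement hL
    simp only [foldl_mcxFun hL] at hf
    rw [permGate_eq_mul_mul (g := hshear.toPerm) hf, clifford_mul_mul_mem_cliffordLevel_iff hφ₁ hφ₂,
      hshear.mem_cliffordLevel_iff]
    exact ⟨isSemiClifford_clifford_mul_mul hφ₁ hφ₂ hshear.isSemiClifford,
      degreeLE_mcxDisplacement hcard⟩
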